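/- arXiv:1506.06495 — 2 statements merged into one kernel-verified Lean document; each statement's English description precedes it below -/
import Mathlib

section
/- Let A be a linearly ordered type and L(A) the free Lie algebra over ℤ on A. Then the derived subalgebra L(A)′ = [L(A), L(A)] is a free Lie algebra, freely generated by the set A⁽¹⁾ of all left-normed brackets [a_{i₁}, a_{i₂}, …, a_{i_κ}] with κ ≥ 2, a_{i_t} ∈ A, and a_{i₁} > a_{i₂} ≤ a_{i₃} ≤ ⋯ ≤ a_{i_κ}; that is, the canonical Lie algebra map from the free Lie algebra on the set of sequences (a₁,…,a_κ) with κ ≥ 2 and a₁ > a₂ ≤ a₃ ≤ ⋯ ≤ a_κ, sending each sequence to the corresponding left-normed bracket of generators, is injective with image L(A)′. -/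
/-!
The proof iterates Lazard elimination. If `m` is one of the generators of a free Lie algebra
`L(X)` over a commutative ring `R`, then `L(X)` is the direct sum of `R m` and a free Lie
subalgebra on the brackets `[x, m, …, m]` with `x ≠ m` and any number of `m`'s. Freeness
(`lazard_injective`) follows by mapping `L(X)` to the semidirect sum of `R` and the free Lie
algebra on the pairs `(x, j)`, on which `R` acts by a shift derivation.

For a finite set `T` of letters, eliminate its elements in increasing order. Once the letters of
an initial segment `S` are eliminated, the free generators are the brackets `[h, t₁, …, tₖ]` with
`h ∈ T` and `t₁ ≤ ⋯ ≤ tₖ` in `S`, where `t₁ < h` if `k > 0` and `h ∉ S` if `k = 0`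
(`elimMap_step`, `elimMap_spec`). For `S = T` these are the sequences of `DecSeq A` with letters
in `T`. Every element of a free Lie algebra involves finitely many generators, so `psiDer A` is
injective, and its range together with the span of the letters is all of `L(A)`. The range lies in
the derived subalgebra, and the letters are linearly independent modulo the derived subalgebra
(`eq_zero_of_mem_span_of_mem_derived`), so the range is the whole derived subalgebra.

The auxiliary results are stated over a general coefficient ring `R`; besides being more general,
this keeps the module structure of a free Lie algebra apart from the canonical `ℤ`-module structure
of an abelian group.
-/

/-- The left-normed bracket `[a₁, a₂, …, a_κ]` of the generators indexed by a list of
elements of `A` (zero on the empty list). -/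
noncomputable def lnbOf (A : Type) : List A → FreeLieAlgebra ℤ A
  | [] => 0
  | h :: t => (t.map (FreeLieAlgebra.of ℤ)).foldl (fun u v => ⁅u, v⁆) (FreeLieAlgebra.of ℤ h)

/-- Sequences `(a₁, …, a_κ)` with `κ ≥ 2` and `a₁ > a₂ ≤ a₃ ≤ ⋯ ≤ a_κ`: the index set
`A⁽¹⁾` of the standard free generating set of the derived subalgebra. -/
def DecSeq (A : Type) [LinearOrder A] : Type :=
  { l : List A // ∃ h h' t, l = h :: h' :: t ∧ h' < h ∧ List.Chain' (· ≤ ·) (h' :: t) }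

/-- The canonical Lie algebra map from the free Lie algebra on `A⁽¹⁾`, sending each
sequence to the corresponding left-normed bracket of generators. -/
noncomputable def psiDer (A : Type) [LinearOrder A] :
    FreeLieAlgebra ℤ (DecSeq A) →ₗ⁅ℤ⁆ FreeLieAlgebra ℤ A :=
  FreeLieAlgebra.lift ℤ fun l => lnbOf A l.1

namespace DerivedFree

variable {R : Type} [CommRing R]

/-! ### Generalities on free Lie algebras -/

/-- A Lie subalgebra of a free Lie algebra containing the generators is everything. -/
theorem mem_of_forall_of {X : Type} (K : LieSubalgebra R (FreeLieAlgebra R X))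
    (h : ∀ x, FreeLieAlgebra.of R x ∈ K) (z : FreeLieAlgebra R X) : z ∈ K := by
  let f : FreeLieAlgebra R X →ₗ⁅R⁆ K := FreeLieAlgebra.lift R fun x => ⟨_, h x⟩
  have hf : K.incl.comp f = LieHom.id := by
    ext x; simp [f]
  have := (f z).2
  have h2 : ((f z : K) : FreeLieAlgebra R X) = z := LieHom.congr_fun hf z
  rwa [h2] at this

/-- Every element of a free Lie algebra involves only finitely many generators. -/
theorem exists_finset_mem_lieSpan {X : Type} (z : FreeLieAlgebra R X) :
    ∃ s : Finset X, z ∈ LieSubalgebra.lieSpan R (FreeLieAlgebra R X)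
      (FreeLieAlgebra.of R '' (s : Set X)) := by
  classical
  have mono : ∀ {s t : Finset X}, s ⊆ t →
      LieSubalgebra.lieSpan R (FreeLieAlgebra R X) (FreeLieAlgebra.of R '' (s : Set X)) ≤
      LieSubalgebra.lieSpan R (FreeLieAlgebra R X) (FreeLieAlgebra.of R '' (t : Set X)) :=
    fun h => LieSubalgebra.lieSpan_mono (Set.image_mono (by exact_mod_cast h))
  let K : LieSubalgebra R (FreeLieAlgebra R X) :=
    { carrier := {z | ∃ s : Finset X, z ∈ LieSubalgebra.lieSpan R (FreeLieAlgebra R X)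
        (FreeLieAlgebra.of R '' (s : Set X))}
      zero_mem' := ⟨∅, zero_mem _⟩
      add_mem' := by
        rintro a b ⟨s, hs⟩ ⟨t, ht⟩
        exact ⟨s ∪ t, add_mem (mono Finset.subset_union_left hs)
          (mono Finset.subset_union_right ht)⟩
      smul_mem' := by
        rintro c a ⟨s, hs⟩
        exact ⟨s, Submodule.smul_mem _ c hs⟩
      lie_mem' := by
        rintro a b ⟨s, hs⟩ ⟨t, ht⟩
        exact ⟨s ∪ t, LieSubalgebra.lie_mem _ (mono Finset.subset_union_left hs)
          (mono Finset.subset_union_right ht)⟩ }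
  exact mem_of_forall_of K (fun x => ⟨{x}, LieSubalgebra.subset_lieSpan (by simp)⟩) z

/-- Any map from the generators extends to a derivation of the free Lie algebra `F`. It is read off
from the Lie algebra map `x ↦ (x, d x)` into the square-zero extension of `F` by its adjoint
module. -/
theorem exists_derivation {X : Type} (d : X → FreeLieAlgebra R X) :
    ∃ D : LieDerivation R (FreeLieAlgebra R X) (FreeLieAlgebra R X),
      ∀ x, D (FreeLieAlgebra.of R x) = d x := by
  let c : LieModule.Cohomology.twoCocycle R (FreeLieAlgebra R X) (FreeLieAlgebra R X) := 0
  let g : FreeLieAlgebra R X →ₗ⁅R⁆ LieAlgebra.ofTwoCocycle c :=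
    FreeLieAlgebra.lift R fun x => ⟨(FreeLieAlgebra.of R x, d x)⟩
  let p : LieAlgebra.ofTwoCocycle c →ₗ⁅R⁆ FreeLieAlgebra R X :=
    { toFun := fun z => z.carrier.1
      map_add' := fun _ _ => rfl
      map_smul' := fun _ _ => rfl
      map_lie' := rfl }
  have hp : p.comp g = LieHom.id := by
    ext1 x
    change (g (FreeLieAlgebra.of R x)).carrier.1 = FreeLieAlgebra.of R x
    simp [g]
  have hp' : ∀ z, (g z).carrier.1 = z := fun z => LieHom.congr_fun hp z
  refine ⟨{ toFun := fun z => (g z).carrier.2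
            map_add' := fun a b => by rw [map_add]; rfl
            map_smul' := fun r a => by rw [map_smul]; rfl
            leibniz' := fun a b => ?_ }, fun x => ?_⟩
  · change (g ⁅a, b⁆).carrier.2 = ⁅a, (g b).carrier.2⁆ - ⁅b, (g a).carrier.2⁆
    rw [LieHom.map_lie]
    change (0 : FreeLieAlgebra R X) + ⁅(g a).carrier.1, (g b).carrier.2⁆ -
      ⁅(g b).carrier.1, (g a).carrier.2⁆ = _
    rw [hp', hp', zero_add]
  · change (g (FreeLieAlgebra.of R x)).carrier.2 = d x
    simp [g]

/-! ### Lazard elimination of one generator -/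

/-- The iterated right bracket `[x, m, …, m]` with `j` copies of `m`. -/
def rbr {L : Type} [LieRing L] (x m : L) (j : ℕ) : L := (fun u => ⁅u, m⁆)^[j] x

theorem rbr_succ {L : Type} [LieRing L] (x m : L) (j : ℕ) :
    rbr x m (j + 1) = ⁅rbr x m j, m⁆ := Function.iterate_succ_apply' _ _ _

theorem map_rbr {L M : Type} [LieRing L] [LieAlgebra R L] [LieRing M] [LieAlgebra R M]
    (f : L →ₗ⁅R⁆ M) (x m : L) (j : ℕ) : f (rbr x m j) = rbr (f x) (f m) j := by
  induction j with
  | zero => rfl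
  | succ j ih => rw [rbr_succ, rbr_succ, LieHom.map_lie, ih]

/-- The map `(x, j) ↦ [x, m, …, m]` of Lazard elimination. -/
noncomputable def lazard (R : Type) [CommRing R] {X : Type} (m : X) :
    FreeLieAlgebra R ({x : X // x ≠ m} × ℕ) →ₗ⁅R⁆ FreeLieAlgebra R X :=
  FreeLieAlgebra.lift R fun p =>
    rbr (FreeLieAlgebra.of R p.1.1) (FreeLieAlgebra.of R m) p.2

/-- Let `R` act on the free Lie algebra on the pairs by the derivation `(x, j) ↦ -(x, j + 1)`, and
send `m` to a generator of `R` and `x ≠ m` to `(x, 0)`. This defines a map from the free Lie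
algebra on `X` to the semidirect sum, which composed with `lazard R m` is the inclusion of the
ideal. Here the abelian Lie algebra `R` is encoded as the free Lie algebra on one generator. -/
theorem lazard_injective {X : Type} (m : X) : Function.Injective (lazard R m) := by
  classical
  obtain ⟨D, hD⟩ := exists_derivation (X := {x : X // x ≠ m} × ℕ)
    fun p => -FreeLieAlgebra.of R (p.1, p.2 + 1)
  let ψ : FreeLieAlgebra R Unit →ₗ⁅R⁆ LieDerivation R
      (FreeLieAlgebra R ({x : X // x ≠ m} × ℕ)) (FreeLieAlgebra R ({x : X // x ≠ m} × ℕ)) :=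
    FreeLieAlgebra.lift R fun _ => D
  let σ : FreeLieAlgebra R X →ₗ⁅R⁆ LieAlgebra.SemiDirectSum _ _ ψ :=
    FreeLieAlgebra.lift R fun x =>
      if h : x = m then LieAlgebra.SemiDirectSum.inr ψ (FreeLieAlgebra.of R ())
      else LieAlgebra.SemiDirectSum.inl ψ (FreeLieAlgebra.of R (⟨x, h⟩, 0))
  have key : ∀ (x : {x : X // x ≠ m}) (j : ℕ),
      σ (rbr (FreeLieAlgebra.of R x.1) (FreeLieAlgebra.of R m) j) =
        LieAlgebra.SemiDirectSum.inl ψ (FreeLieAlgebra.of R (x, j)) := by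
    intro x j
    induction j with
    | zero => simp [rbr, σ, x.2]
    | succ j ih =>
      rw [rbr_succ, LieHom.map_lie, ih]
      simp [σ, ψ, hD]
  have hσ : σ.comp (lazard R m) = LieAlgebra.SemiDirectSum.inl ψ := by
    ext1 p
    rw [LieHom.comp_apply, lazard, FreeLieAlgebra.lift_of_apply]
    exact key p.1 p.2
  have hinj : Function.Injective (σ.comp (lazard R m)) := by
    rw [hσ]; exact LieAlgebra.SemiDirectSum.inl_injective ψ
  intro a b hab
  apply hinj
  simp [LieHom.comp_apply, hab]

/-- The range of `lazard R m` is stable under bracketing with `m`, so together with `m` it spans a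
subalgebra, which contains all generators. -/
theorem lazard_spans {X : Type} (m : X) (z : FreeLieAlgebra R X) :
    ∃ y, ∃ n : R, z = lazard R m y + n • FreeLieAlgebra.of R m := by
  have hm : ∀ y, ∃ y', ⁅lazard R m y, FreeLieAlgebra.of R m⁆ = lazard R m y' := by
    let K : LieSubalgebra R (FreeLieAlgebra R ({x : X // x ≠ m} × ℕ)) :=
      { carrier := {y | ∃ y', ⁅lazard R m y, FreeLieAlgebra.of R m⁆ = lazard R m y'}
        zero_mem' := ⟨0, by simp⟩
        add_mem' := by
          rintro a b ⟨a', ha⟩ ⟨b', hb⟩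
          exact ⟨a' + b', by simp [ha, hb]⟩
        smul_mem' := by
          rintro c a ⟨a', ha⟩
          exact ⟨c • a', by rw [map_smul, smul_lie, ha, map_smul]⟩
        lie_mem' := by
          rintro a b ⟨a', ha⟩ ⟨b', hb⟩
          refine ⟨⁅a, b'⁆ - ⁅b, a'⁆, ?_⟩
          rw [LieHom.map_lie, lie_lie, ha, hb, map_sub, LieHom.map_lie, LieHom.map_lie] }
    refine mem_of_forall_of K fun p => ?_
    refine ⟨FreeLieAlgebra.of R (p.1, p.2 + 1), ?_⟩
    simp only [lazard, FreeLieAlgebra.lift_of_apply]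
    rw [rbr_succ]
  let K : LieSubalgebra R (FreeLieAlgebra R X) :=
    { carrier := {z | ∃ y, ∃ n : R, z = lazard R m y + n • FreeLieAlgebra.of R m}
      zero_mem' := ⟨0, 0, by simp⟩
      add_mem' := by
        rintro a b ⟨y, n, rfl⟩ ⟨y', n', rfl⟩
        exact ⟨y + y', n + n', by rw [map_add, add_smul]; abel⟩
      smul_mem' := by
        rintro c a ⟨y, n, rfl⟩
        exact ⟨c • y, c * n, by rw [map_smul, smul_add, mul_smul]⟩
      lie_mem' := by
        rintro a b ⟨y, n, rfl⟩ ⟨y', n', rfl⟩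
        obtain ⟨u, hu⟩ := hm y
        obtain ⟨v, hv⟩ := hm y'
        refine ⟨⁅y, y'⁆ + n' • u - n • v, 0, ?_⟩
        rw [lie_add, add_lie, add_lie, lie_smul, smul_lie, smul_lie, lie_smul, lie_self, hu,
          ← lie_skew (FreeLieAlgebra.of R m) (lazard R m y'), hv, map_sub, map_add, map_smul, map_smul,
          LieHom.map_lie]
        simp
        abel }
  refine mem_of_forall_of K (fun x => ?_) z
  by_cases h : x = m
  · exact ⟨0, 1, by simp [h]⟩
  · exact ⟨FreeLieAlgebra.of R (⟨x, h⟩, 0), 0, by simp [lazard, rbr]⟩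

/-- Lazard elimination transported along a bijection `u` of index sets and a Lie algebra map `φ`
out of the free Lie algebra. -/
theorem elim_step {X Y L : Type} [LieRing L] [LieAlgebra R L] (m : X)
    (φ : FreeLieAlgebra R X →ₗ⁅R⁆ L) (g : FreeLieAlgebra R Y →ₗ⁅R⁆ L)
    (u : {x : X // x ≠ m} × ℕ → Y) (hu : Function.Bijective u)
    (hg : ∀ x j, g (FreeLieAlgebra.of R (u (x, j))) =
      rbr (φ (FreeLieAlgebra.of R x.1)) (φ (FreeLieAlgebra.of R m)) j) :
    (Function.Injective φ → Function.Injective g) ∧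
      ∀ z, ∃ y, ∃ n : R, φ z = g y + n • φ (FreeLieAlgebra.of R m) := by
  let e := Equiv.ofBijective u hu
  let r : FreeLieAlgebra R ({x : X // x ≠ m} × ℕ) →ₗ⁅R⁆ FreeLieAlgebra R Y :=
    FreeLieAlgebra.lift R fun p => FreeLieAlgebra.of R (e p)
  let s : FreeLieAlgebra R Y →ₗ⁅R⁆ FreeLieAlgebra R ({x : X // x ≠ m} × ℕ) :=
    FreeLieAlgebra.lift R fun p => FreeLieAlgebra.of R (e.symm p)
  have hrs : r.comp s = LieHom.id := by
    ext p; simp [r, s]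
  have hgr : g.comp r = φ.comp (lazard R m) := by
    ext1 p
    simp only [LieHom.comp_apply, lazard, r, FreeLieAlgebra.lift_of_apply]
    rw [map_rbr]
    exact hg p.1 p.2
  have hrs' : ∀ y, r (s y) = y := fun y => LieHom.congr_fun hrs y
  have hgr' : ∀ y, g (r y) = φ (lazard R m y) := fun y => LieHom.congr_fun hgr y
  constructor
  · intro hφ a b hab
    rw [← hrs' a, ← hrs' b, hgr', hgr'] at hab
    rw [← hrs' a, ← hrs' b, lazard_injective m (hφ hab)]
  · intro z
    obtain ⟨y, n, rfl⟩ := lazard_spans m z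
    exact ⟨r y, n, by rw [map_add, map_smul, hgr']⟩

/-! ### Successive elimination of the letters of a finite set -/

variable {A : Type} [LinearOrder A]

/-- The generators remaining after the letters of `S` have been eliminated, in increasing order,
from the free Lie algebra on `T`. The pair `(h, t)` encodes the sequence `h :: t`. -/
abbrev ElimSeq (S T : Finset A) : Type :=
  { p : A × List A // p.1 ∈ T ∧ p.2.Pairwise (· ≤ ·) ∧ (∀ x ∈ p.2, x ∈ S) ∧
    (p.2 = [] → p.1 ∉ S) ∧ ∀ b ∈ p.2.head?, b < p.1 }

/-- The left-normed bracket of the generators indexed by a list, over an arbitrary coefficient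
ring; for `ℤ` it is `lnbOf`. -/
noncomputable def lnb (R : Type) [CommRing R] {A : Type} : List A → FreeLieAlgebra R A
  | [] => 0
  | h :: t => (t.map (FreeLieAlgebra.of R)).foldl (fun u v => ⁅u, v⁆) (FreeLieAlgebra.of R h)

/-- The Lie algebra map sending each remaining sequence to its left-normed bracket. -/
noncomputable def elimMap (R : Type) [CommRing R] (S T : Finset A) :
    FreeLieAlgebra R (ElimSeq S T) →ₗ⁅R⁆ FreeLieAlgebra R A :=
  FreeLieAlgebra.lift R fun p => lnb R (p.1.1 :: p.1.2)

omit [LinearOrder A] in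
theorem lnb_append_replicate (h a : A) (t : List A) (j : ℕ) :
    lnb R (h :: (t ++ List.replicate j a)) =
      rbr (lnb R (h :: t)) (FreeLieAlgebra.of R a) j := by
  induction j with
  | zero => simp [rbr]
  | succ j ih =>
    rw [rbr_succ, ← ih, List.replicate_succ', ← List.append_assoc]
    simp [lnb]

/-- In a sorted list bounded by `a`, the copies of `a` come last. -/
theorem exists_eq_append_replicate (a : A) (t : List A) (hs : t.Pairwise (· ≤ ·))
    (ht : ∀ x ∈ t, x ≤ a) : ∃ t' n, t = t' ++ List.replicate n a ∧ ∀ x ∈ t', x ≠ a := by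
  induction t with
  | nil => exact ⟨[], 0, by simp⟩
  | cons b t ih =>
    rw [List.pairwise_cons] at hs
    by_cases hb : b = a
    · refine ⟨[], t.length + 1, ?_, by simp⟩
      rw [List.nil_append, List.replicate_succ, hb]
      congr 1
      exact List.eq_replicate_iff.2 ⟨rfl, fun x hx =>
        le_antisymm (ht x (by simp [hx])) (hb ▸ hs.1 x hx)⟩
    · obtain ⟨t', n, h1, h2⟩ := ih hs.2 fun x hx => ht x (by simp [hx])
      exact ⟨b :: t', n, by simp [h1], by simpa [hb] using h2⟩

theorem append_replicate_inj {a : A} {t t' : List A} {j j' : ℕ} (ht : ∀ x ∈ t, x ≠ a)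
    (ht' : ∀ x ∈ t', x ≠ a) (h : t ++ List.replicate j a = t' ++ List.replicate j' a) :
    t = t' ∧ j = j' := by
  have h1 := congrArg (List.filter (fun x => decide (x ≠ a))) h
  have h2 := congrArg (List.count a) h
  have e1 : List.filter (fun x => decide (x ≠ a)) t = t := List.filter_eq_self.2 (by simpa using ht)
  have e2 : List.filter (fun x => decide (x ≠ a)) t' = t' :=
    List.filter_eq_self.2 (by simpa using ht')
  rw [List.filter_append, List.filter_append, e1, e2] at h1
  rw [List.count_append, List.count_append, List.count_eq_zero.2 (fun hx => ht a hx rfl),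
    List.count_eq_zero.2 (fun hx => ht' a hx rfl)] at h2
  simp at h1 h2
  exact ⟨h1, h2⟩

/-- Eliminating the letter `a` turns the generators `ElimSeq S T` into
`ElimSeq (insert a S) T`. -/
theorem elimMap_step {S T : Finset A} {a : A} (hS : ∀ x ∈ S, x < a) (haT : a ∈ T)
    (hinit : ∀ t ∈ T, t < a → t ∈ S) :
    (Function.Injective (elimMap R S T) → Function.Injective (elimMap R (insert a S) T)) ∧
      ∀ z, ∃ y, ∃ n : R,
        elimMap R S T z = elimMap R (insert a S) T y + n • FreeLieAlgebra.of R a := by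
  have haS : a ∉ S := fun h => lt_irrefl _ (hS a h)
  let m : ElimSeq S T := ⟨(a, []), haT, by simp, by simp, by simpa using haS, by simp⟩
  have hm : elimMap R S T (FreeLieAlgebra.of R m) = FreeLieAlgebra.of R a := by
    simp [elimMap, m, lnb]
  have hne : ∀ x : {x : ElimSeq S T // x ≠ m}, x.1.1.2 = [] → x.1.1.1 ≠ a := by
    rintro ⟨⟨⟨h, t⟩, hx⟩, hxm⟩ ht ha
    exact hxm (Subtype.ext (Prod.ext ha ht))
  have hta : ∀ x : ElimSeq S T, ∀ b ∈ x.1.2, b ≠ a :=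
    fun x b hb => (hS b (x.2.2.2.1 b hb)).ne
  let u : {x : ElimSeq S T // x ≠ m} × ℕ → ElimSeq (insert a S) T := fun p =>
    ⟨(p.1.1.1.1, p.1.1.1.2 ++ List.replicate p.2 a), by
      obtain ⟨x, j⟩ := p
      have hx := hne x
      obtain ⟨⟨⟨h, t⟩, h1, h2, h3, h4, h5⟩, hxm⟩ := x
      dsimp only at *
      refine ⟨h1, ?_, ?_, ?_, ?_⟩
      · rw [List.pairwise_append]
        refine ⟨h2, List.pairwise_replicate.2 (Or.inr le_rfl), fun b hb c hc => ?_⟩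
        rw [List.eq_of_mem_replicate hc]
        exact (hS b (h3 b hb)).le
      · intro b hb
        rcases List.mem_append.1 hb with hb | hb
        · exact Finset.mem_insert_of_mem (h3 b hb)
        · rw [List.eq_of_mem_replicate hb]; exact Finset.mem_insert_self _ _
      · intro he
        have ht : t = [] := (List.append_eq_nil_iff.1 he).1
        rw [Finset.mem_insert, not_or]
        exact ⟨hx ht, h4 ht⟩
      · intro b hb
        cases t with
        | cons c t => exact h5 b (by simpa using hb)
        | nil =>
          have hba : b = a := List.eq_of_mem_replicate (List.mem_of_mem_head? hb)
          rw [hba]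
          rcases lt_trichotomy a h with hl | hl | hl
          · exact hl
          · exact absurd hl.symm (hx rfl)
          · exact absurd (hinit h h1 hl) (h4 rfl)⟩
  have hu : Function.Bijective u := by
    constructor
    · rintro ⟨x, j⟩ ⟨x', j'⟩ hxx
      have h1 := congrArg (fun y => y.1.1) hxx
      have h2 := congrArg (fun y => y.1.2) hxx
      obtain ⟨ht, hj⟩ := append_replicate_inj (hta x.1) (hta x'.1) h2
      exact Prod.ext (Subtype.ext (Subtype.ext (Prod.ext h1 ht))) hj
    · rintro ⟨⟨h, t⟩, h1, h2, h3, h4, h5⟩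
      have hle : ∀ x ∈ t, x ≤ a := fun x hx => by
        rcases Finset.mem_insert.1 (h3 x hx) with rfl | hx
        · exact le_rfl
        · exact (hS x hx).le
      obtain ⟨t', n, rfl, ht'⟩ := exists_eq_append_replicate a t h2 hle
      have hnil : t' = [] → h ∉ insert a S := by
        rintro rfl
        cases n with
        | zero => exact h4 (by simp)
        | succ n =>
          have hah : a < h := h5 a (by simp [List.replicate_succ])
          rw [Finset.mem_insert, not_or]
          exact ⟨hah.ne', fun hh => lt_asymm hah (hS h hh)⟩
      refine ⟨(⟨⟨(h, t'), h1, (List.pairwise_append.1 h2).1, fun x hx => ?_, fun he hh => ?_,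
        fun b hb => ?_⟩, fun he => ?_⟩, n), rfl⟩
      · exact (Finset.mem_insert.1 (h3 x (by simp [hx]))).resolve_left (ht' x hx)
      · exact hnil he (Finset.mem_insert_of_mem hh)
      · cases t' with
        | nil => simp at hb
        | cons c t' => exact h5 b (by simpa using hb)
      · have e := congrArg Subtype.val he
        have e1 : h = a := congrArg Prod.fst e
        have e2 : t' = [] := congrArg Prod.snd e
        exact hnil e2 (by rw [e1]; exact Finset.mem_insert_self _ _)
  have := elim_step m (elimMap R S T) (elimMap R (insert a S) T) u hu (fun x j => by
    rw [hm]
    simp only [elimMap, FreeLieAlgebra.lift_of_apply]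
    exact lnb_append_replicate _ _ _ _)
  rwa [hm] at this

/-- Before any elimination, the generators are the letters of `T`, and the free Lie algebra on `T`
is a retract of the one on `A`. -/
theorem elimMap_empty_injective (T : Finset A) :
    Function.Injective (elimMap R (∅ : Finset A) T) := by
  let r : FreeLieAlgebra R A →ₗ⁅R⁆ FreeLieAlgebra R (ElimSeq (∅ : Finset A) T) :=
    FreeLieAlgebra.lift R fun a =>
      if h : a ∈ T then FreeLieAlgebra.of R ⟨(a, []), h, by simp, by simp, by simp, by simp⟩ else 0
  have hr : r.comp (elimMap R ∅ T) = LieHom.id := by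
    ext1 p
    obtain ⟨⟨h, t⟩, h1, h2, h3, h4, h5⟩ := p
    have ht : t = [] := List.eq_nil_iff_forall_not_mem.2 fun x hx => by simpa using h3 x hx
    subst ht
    dsimp only at h1
    simp [elimMap, lnb, r, h1]
  intro a b hab
  have := congrArg r hab
  rwa [show r (elimMap R ∅ T a) = a from LieHom.congr_fun hr a,
    show r (elimMap R ∅ T b) = b from LieHom.congr_fun hr b] at this

theorem lieSpan_le_range_elimMap_empty (T : Finset A) :
    LieSubalgebra.lieSpan R (FreeLieAlgebra R A) (FreeLieAlgebra.of R '' (T : Set A)) ≤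
      (elimMap R (∅ : Finset A) T).range := by
  rw [LieSubalgebra.lieSpan_le]
  rintro _ ⟨a, ha, rfl⟩
  refine (LieHom.mem_range _ _).2 ⟨FreeLieAlgebra.of R
    ⟨(a, []), by simpa using ha, by simp, by simp, by simp, by simp⟩, ?_⟩
  simp [elimMap, lnb]

/-- After an initial segment `S` of `T` has been eliminated, the new generators are free, and
together with the span of the letters they generate account for every element of the subalgebra
generated by `T`. -/
theorem elimMap_spec (T S : Finset A) : S ⊆ T → (∀ x ∈ S, ∀ t ∈ T, t < x → t ∈ S) →
    Function.Injective (elimMap R S T) ∧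
      ∀ z ∈ LieSubalgebra.lieSpan R (FreeLieAlgebra R A) (FreeLieAlgebra.of R '' (T : Set A)),
        ∃ y, z - elimMap R S T y ∈
          Submodule.span R (Set.range (FreeLieAlgebra.of R : A → FreeLieAlgebra R A)) := by
  induction S using Finset.induction_on_max with
  | empty =>
    intro _ _
    refine ⟨elimMap_empty_injective T, fun z hz => ?_⟩
    obtain ⟨y, rfl⟩ := (LieHom.mem_range _ _).1 (lieSpan_le_range_elimMap_empty T hz)
    exact ⟨y, by simp⟩
  | insert a S hS ih =>
    intro hST hinit
    have haT : a ∈ T := hST (Finset.mem_insert_self _ _)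
    obtain ⟨ih1, ih2⟩ := ih (fun x hx => hST (Finset.mem_insert_of_mem hx)) fun x hx t ht htx =>
      (Finset.mem_insert.1 (hinit x (Finset.mem_insert_of_mem hx) t ht htx)).resolve_left
        (htx.trans (hS x hx)).ne
    obtain ⟨h1, h2⟩ := elimMap_step (R := R) hS haT fun t ht hta =>
      (Finset.mem_insert.1 (hinit a (Finset.mem_insert_self _ _) t ht hta)).resolve_left hta.ne
    refine ⟨h1 ih1, fun z hz => ?_⟩
    obtain ⟨y, hy⟩ := ih2 z hz
    obtain ⟨y', n, hy'⟩ := h2 y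
    refine ⟨y', ?_⟩
    have e : z - elimMap R (insert a S) T y' =
        (z - elimMap R S T y) + n • FreeLieAlgebra.of R a := by
      rw [hy']; abel
    rw [e]
    exact add_mem hy (Submodule.smul_mem _ _ (Submodule.subset_span ⟨a, rfl⟩))

/-! ### Comparison with the sequences of `DecSeq` -/

/-- After all letters of `T` have been eliminated, the remaining sequences are those of
`DecSeq A` with letters in `T`. -/
def toDecSeq (T : Finset A) (p : ElimSeq T T) : DecSeq A :=
  ⟨p.1.1 :: p.1.2, by
    obtain ⟨⟨h, t⟩, h1, h2, h3, h4, h5⟩ := p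
    cases t with
    | nil => exact absurd h1 (h4 rfl)
    | cons c t =>
      exact ⟨h, c, t, rfl, h5 c (by simp), List.isChain_iff_pairwise.2 h2⟩⟩

/-- The map of free Lie algebras induced by `toDecSeq`. -/
noncomputable def decMap (R : Type) [CommRing R] (T : Finset A) :
    FreeLieAlgebra R (ElimSeq T T) →ₗ⁅R⁆ FreeLieAlgebra R (DecSeq A) :=
  FreeLieAlgebra.lift R fun p => FreeLieAlgebra.of R (toDecSeq T p)

/-- The analogue of `psiDer` over an arbitrary coefficient ring. -/
noncomputable def psi (R : Type) [CommRing R] (A : Type) [LinearOrder A] :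
    FreeLieAlgebra R (DecSeq A) →ₗ⁅R⁆ FreeLieAlgebra R A :=
  FreeLieAlgebra.lift R fun l => lnb R l.1

theorem psi_decMap (T : Finset A) (y : FreeLieAlgebra R (ElimSeq T T)) :
    psi R A (decMap R T y) = elimMap R T T y := by
  have : (psi R A).comp (decMap R T) = elimMap R T T := by
    ext1 p
    rw [LieHom.comp_apply, decMap, elimMap, psi]
    simp only [FreeLieAlgebra.lift_of_apply]
    rfl
  exact LieHom.congr_fun this y

/-- Finitely many sequences involve finitely many letters. -/
theorem exists_decMap_eq (z : FreeLieAlgebra R (DecSeq A)) : ∃ T y, decMap R T y = z := by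
  obtain ⟨s, hs⟩ := exists_finset_mem_lieSpan z
  refine ⟨s.biUnion fun l => l.1.toFinset, (LieHom.mem_range _ _).1
    (LieSubalgebra.lieSpan_le.2 ?_ hs)⟩
  rintro _ ⟨⟨l, hl⟩, hls, rfl⟩
  have hmem : ∀ x ∈ l, x ∈ s.biUnion fun l => l.1.toFinset := fun x hx =>
    Finset.mem_biUnion.2 ⟨⟨l, hl⟩, hls, List.mem_toFinset.2 hx⟩
  obtain ⟨h, c, t, rfl, hc, hch⟩ := hl
  refine (LieHom.mem_range _ _).2 ⟨FreeLieAlgebra.of R ⟨(h, c :: t), hmem h (by simp),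
    List.isChain_iff_pairwise.1 hch, fun x hx => hmem x (List.mem_cons_of_mem _ hx), by simp,
    by simpa using hc⟩, ?_⟩
  simp [decMap, toDecSeq]

theorem psi_injective : Function.Injective (psi R A) := by
  rw [injective_iff_map_eq_zero]
  intro z hz
  obtain ⟨T, y, rfl⟩ := exists_decMap_eq z
  have hinj := (elimMap_spec (R := R) T T subset_rfl fun _ _ t ht _ => ht).1
  rw [psi_decMap] at hz
  rw [(injective_iff_map_eq_zero _).1 hinj y hz, map_zero]

theorem exists_sub_psi_mem_span (z : FreeLieAlgebra R A) :
    ∃ y, z - psi R A y ∈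
      Submodule.span R (Set.range (FreeLieAlgebra.of R : A → FreeLieAlgebra R A)) := by
  obtain ⟨T, hT⟩ := exists_finset_mem_lieSpan z
  obtain ⟨y, hy⟩ := (elimMap_spec T T subset_rfl fun _ _ t ht _ => ht).2 z hT
  exact ⟨decMap R T y, by rwa [psi_decMap]⟩

theorem lie_mem_derived {L : Type} [LieRing L] [LieAlgebra R L] (x y : L) :
    ⁅x, y⁆ ∈ LieAlgebra.derivedSeries R L 1 := by
  rw [LieAlgebra.derivedSeries_def, LieAlgebra.derivedSeriesOfIdeal_succ]
  exact LieSubmodule.lie_mem_lie (LieSubmodule.mem_top x) (LieSubmodule.mem_top y)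

omit [LinearOrder A] in
theorem lnb_mem_derived (h c : A) (t : List A) :
    lnb R (h :: c :: t) ∈ LieAlgebra.derivedSeries R (FreeLieAlgebra R A) 1 := by
  induction t using List.reverseRecOn with
  | nil => exact lie_mem_derived (FreeLieAlgebra.of R h) (FreeLieAlgebra.of R c)
  | append_singleton t a _ =>
    have : lnb R (h :: c :: (t ++ [a])) = ⁅lnb R (h :: c :: t), FreeLieAlgebra.of R a⁆ := by
      simp [lnb]
    rw [this]
    exact lie_mem_derived _ _

theorem psi_mem_derived (y : FreeLieAlgebra R (DecSeq A)) :
    psi R A y ∈ LieAlgebra.derivedSeries R (FreeLieAlgebra R A) 1 := by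
  let K : LieSubalgebra R (FreeLieAlgebra R (DecSeq A)) :=
    { (LieAlgebra.derivedSeries R (FreeLieAlgebra R A) 1).toSubmodule.comap
        (psi R A).toLinearMap with
      lie_mem' := fun {a b} _ _ => by
        change psi R A ⁅a, b⁆ ∈ LieAlgebra.derivedSeries R (FreeLieAlgebra R A) 1
        rw [LieHom.map_lie]
        exact lie_mem_derived _ _ }
  refine mem_of_forall_of K (fun p => ?_) y
  change psi R A (FreeLieAlgebra.of R p) ∈ LieAlgebra.derivedSeries R (FreeLieAlgebra R A) 1
  rw [psi, FreeLieAlgebra.lift_of_apply]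
  obtain ⟨l, h, c, t, rfl, -, -⟩ := p
  exact lnb_mem_derived h c t

attribute [local instance] LieRing.ofAssociativeRing

/-- The generators are linearly independent modulo the derived subalgebra: the polynomial ring
on `A`, with zero bracket, receives a Lie algebra map sending generators to variables. -/
theorem eq_zero_of_mem_span_of_mem_derived {w : FreeLieAlgebra R A}
    (hw : w ∈ Submodule.span R (Set.range (FreeLieAlgebra.of R : A → FreeLieAlgebra R A)))
    (hd : w ∈ LieAlgebra.derivedSeries R (FreeLieAlgebra R A) 1) : w = 0 := by
  let f : FreeLieAlgebra R A →ₗ⁅R⁆ MvPolynomial A R :=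
    FreeLieAlgebra.lift R fun a => MvPolynomial.X a
  have hf : f w = 0 := by
    replace hd : w ∈ Submodule.span R {⁅x, y⁆ | (x : FreeLieAlgebra R A) (y)} := by
      rw [← LieAlgebra.coe_derivedSeries_one_eq]; exact hd
    clear hw
    induction hd using Submodule.span_induction with
    | mem x hx =>
      obtain ⟨a, b, rfl⟩ := hx
      rw [LieHom.map_lie, LieRing.of_associative_ring_bracket, mul_comm, sub_self]
    | zero => simp
    | add x y _ _ hx hy => rw [map_add, hx, hy, add_zero]
    | smul c x _ hx => rw [map_smul, hx, smul_zero]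
  obtain ⟨c, rfl⟩ := Finsupp.mem_span_range_iff_exists_finsupp.1 hw
  have hc : Finsupp.linearCombination R (MvPolynomial.X : A → MvPolynomial A R) c = 0 := by
    rw [← hf, Finsupp.linearCombination_apply, Finsupp.sum, Finsupp.sum, map_sum]
    exact Finset.sum_congr rfl fun a _ => by
      rw [map_smul]; simp only [f, FreeLieAlgebra.lift_of_apply]
  rw [linearIndependent_iff.1 (MvPolynomial.linearIndependent_X A R) c hc]
  simp

end DerivedFree

/-- For a linearly ordered type `A`, the derived subalgebra `L(A)′ = [L(A), L(A)]` of
the free Lie algebra on `A` is free on the set `A⁽¹⁾` of left-normed brackets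
`[a_{i₁}, …, a_{i_κ}]` with `κ ≥ 2` and `a_{i₁} > a_{i₂} ≤ a_{i₃} ≤ ⋯ ≤ a_{i_κ}`:
the canonical map from the free Lie algebra on these sequences is injective with
image `L(A)′` (the first term of the derived series). -/
theorem derived_subalgebra_free (A : Type) [LinearOrder A] :
    Function.Injective (psiDer A) ∧
    LinearMap.range (psiDer A).toLinearMap =
      (LieAlgebra.derivedSeries ℤ (FreeLieAlgebra ℤ A) 1).toSubmodule := by
  have hψ : ∀ y, psiDer A y = DerivedFree.psi ℤ A y := fun y => by
    have : (fun l : DecSeq A => lnbOf A l.1) = fun l => DerivedFree.lnb ℤ l.1 := by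
      funext ⟨l, hl⟩
      cases l <;> rfl
    rw [psiDer, this]
    -- the two sides differ only in the instances giving the `ℤ`-Lie algebra structures
    rfl
  refine ⟨fun a b hab => DerivedFree.psi_injective (by rwa [hψ, hψ] at hab),
    le_antisymm ?_ fun z hz => ?_⟩
  · rintro _ ⟨y, rfl⟩
    change psiDer A y ∈ _
    rw [hψ]
    exact DerivedFree.psi_mem_derived y
  · obtain ⟨y, hy⟩ := DerivedFree.exists_sub_psi_mem_span (R := ℤ) z
    have hd := sub_mem ((LieSubmodule.mem_toSubmodule _).1 hz) (DerivedFree.psi_mem_derived y)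
    refine ⟨y, ?_⟩
    change psiDer A y = z
    rw [hψ]
    exact (sub_eq_zero.1 (DerivedFree.eq_zero_of_mem_span_of_mem_derived hy hd)).symm
end

section
/- Let n ≥ 3 and let i₁, …, i_n ∈ {1,…,6} satisfy i₁ > i₂ ≤ i₃ ≤ ⋯ ≤ i_n. Then the left-normed bracket [x_{i₁}, x_{i₂}, …, x_{i_n}] lies in L(W) if and only if either (i₁,i₂) ∈ {(2,1),(4,3)} and at least one of i₃,…,i_n does not belong to {i₁,i₂}, or (i₁,i₂) is a pair with i₂ < i₁ not in {(2,1),(4,3),(6,5)}. -/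
/-!
Modulo `LW` the generators of distinct blocks commute, so `L / LW` is the direct sum of the free
Lie algebras on the three blocks. A left-normed bracket hence dies in the quotient as soon as it
involves two blocks: either its first two letters already lie in different blocks, or its initial
part lies in the subalgebra generated by one block and so commutes, modulo `LW`, with the first
letter from another block (`lnb_mem_LW_of_exists`).

Conversely, a bracket `[x_b, x_a, …]` all of whose letters are the two letters `a`, `b` of one
block is detected by the representation killing the other generators and sending
`x_a ↦ E₂₂`, `x_b ↦ E₂₂ + E₁₂` in the `2 × 2` integer matrices. It kills `LW`, sends `[x_b, x_a]`
to `E₁₂`, and bracketing `E₁₂` on the right with either image gives `E₁₂` again, so the whole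
bracket goes to `E₁₂ ≠ 0` (`lnb_notMem_LW`). When `(i₁, i₂) = (6, 5)` the monotonicity of the
indices forces all of them into the third block.
-/


/-- `L`, the free Lie algebra over `ℤ` on six generators `x₁, …, x₆`
(indexed here by `Fin 6`, so `x (i-1)` is the paper's `xᵢ`). -/
abbrev L : Type := FreeLieAlgebra ℤ (Fin 6)

/-- The free generators of `L`. -/
noncomputable def x (i : Fin 6) : L := FreeLieAlgebra.of ℤ i

/-- The left-normed iterated Lie bracket `[a, u₁, …, u_m]`. -/
noncomputable def lnb (a : L) (l : List L) : L := l.foldl (fun u v => ⁅u, v⁆) a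

/-- `L(W)`: the Lie ideal of `L` generated by all brackets `[x_a, x_b]` where `x_a`
and `x_b` lie in different blocks `𝒱₁ = {x₁,x₂}`, `𝒱₂ = {x₃,x₄}`, `𝒱₃ = {x₅,x₆}`
(the block of the generator with 0-based index `i` is `i / 2`). -/
noncomputable def LW : LieIdeal ℤ L :=
  LieSubmodule.lieSpan ℤ L
    { z | ∃ i j : Fin 6, (i : ℕ) / 2 ≠ (j : ℕ) / 2 ∧ z = ⁅x i, x j⁆ }

theorem lie_x_mem_LW {i j : Fin 6} (h : (i : ℕ) / 2 ≠ (j : ℕ) / 2) : ⁅x i, x j⁆ ∈ LW :=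
  LieSubmodule.subset_lieSpan ⟨i, j, h, rfl⟩

theorem lie_mem_LW_left {u : L} (hu : u ∈ LW) (v : L) : ⁅u, v⁆ ∈ LW := by
  rw [← lie_skew]
  exact neg_mem (LW.lie_mem hu)

theorem lnb_mem_LW {u : L} (hu : u ∈ LW) (l : List L) : lnb u l ∈ LW := by
  induction l generalizing u with
  | nil => exact hu
  | cons v l ih => exact ih (lie_mem_LW_left hu v)

/-- The elements commuting modulo `LW` with a given element are closed under the bracket. -/
theorem lie_lie_mem_LW {u v w : L} (hu : ⁅u, w⁆ ∈ LW) (hv : ⁅v, w⁆ ∈ LW) : ⁅⁅u, v⁆, w⁆ ∈ LW := by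
  rw [lie_lie]
  exact sub_mem (LW.lie_mem hv) (LW.lie_mem hu)

/-- If `u` commutes modulo `LW` with all generators outside the block `k`, then continuing `u` by a
list of generators that leaves the block `k` at least once gives an element of `LW`. -/
theorem lnb_mem_LW_of_exists {k : ℕ} {u : L} (hu : ∀ t : Fin 6, (t : ℕ) / 2 ≠ k → ⁅u, x t⁆ ∈ LW)
    {l : List (Fin 6)} (hl : ∃ t ∈ l, (t : ℕ) / 2 ≠ k) : lnb u (l.map x) ∈ LW := by
  induction l generalizing u with
  | nil => simp at hl
  | cons s l ih =>
    change lnb ⁅u, x s⁆ (l.map x) ∈ LW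
    by_cases hs : (s : ℕ) / 2 = k
    · refine ih (fun t ht => lie_lie_mem_LW (hu t ht) (lie_x_mem_LW ?_)) ?_
      · rw [hs]; exact ht.symm
      · obtain ⟨t, ht, htk⟩ := hl
        rcases List.mem_cons.1 ht with rfl | ht
        · exact absurd hs htk
        · exact ⟨t, ht, htk⟩
    · exact lnb_mem_LW (hu s hs) _

section Detect

attribute [local instance] LieRing.ofAssociativeRing LieAlgebra.ofAssociativeAlgebra

/-- The images of the generators under the representation detecting brackets in `x a` and `x b`:
`a ↦ E₂₂`, `b ↦ E₂₂ + E₁₂`, and all other generators go to `0`. -/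
def detectGen (a b i : Fin 6) : Matrix (Fin 2) (Fin 2) ℤ :=
  if i = a then !![0, 0; 0, 1] else if i = b then !![0, 1; 0, 1] else 0

/-- The Lie algebra homomorphism from `L` to `2 × 2` integer matrices extending `detectGen a b`. -/
noncomputable def detect (a b : Fin 6) : L →ₗ⁅ℤ⁆ Matrix (Fin 2) (Fin 2) ℤ :=
  FreeLieAlgebra.lift ℤ (detectGen a b)

theorem detect_x (a b i : Fin 6) : detect a b (x i) = detectGen a b i :=
  FreeLieAlgebra.lift_of_apply _ _

theorem LW_le_ker_detect {a b : Fin 6} (hab : (a : ℕ) / 2 = (b : ℕ) / 2) :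
    LW ≤ (detect a b).ker := by
  refine LieSubmodule.lieSpan_le.2 ?_
  rintro _ ⟨i, j, hij, rfl⟩
  have hzero : ∀ i : Fin 6, i ≠ a → i ≠ b → detectGen a b i = 0 := by
    intro i h1 h2
    simp [detectGen, h1, h2]
  simp only [SetLike.mem_coe, LieHom.mem_ker, LieHom.map_lie, detect_x]
  -- `i` and `j` cannot both belong to `{a, b}`, so one of the two matrices vanishes.
  by_cases hi : i = a ∨ i = b
  · rw [hzero j, lie_zero]
    all_goals
      rintro rfl
      rcases hi with rfl | rfl <;> omega
  · push Not at hi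
    rw [hzero i hi.1 hi.2, zero_lie]

theorem detect_lnb {a b : Fin 6} {u : L} (hu : detect a b u = !![0, 1; 0, 0])
    {l : List (Fin 6)} (hl : ∀ t ∈ l, t = b ∨ t = a) :
    detect a b (lnb u (l.map x)) = !![0, 1; 0, 0] := by
  induction l generalizing u with
  | nil => exact hu
  | cons s l ih =>
    refine ih (u := ⁅u, x s⁆) ?_ fun t ht => hl t (List.mem_cons_of_mem _ ht)
    rw [LieHom.map_lie, hu, detect_x, Ring.lie_def, detectGen]
    have hs := hl s List.mem_cons_self
    split_ifs
    · simp
    · simp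
    · tauto

theorem lnb_notMem_LW {a b : Fin 6} (hne : a ≠ b) (hab : (a : ℕ) / 2 = (b : ℕ) / 2)
    {l : List (Fin 6)} (hl : ∀ t ∈ l, t = b ∨ t = a) :
    lnb ⁅x b, x a⁆ (l.map x) ∉ LW := by
  intro hmem
  have hu : detect a b ⁅x b, x a⁆ = !![0, 1; 0, 0] := by
    rw [LieHom.map_lie, detect_x, detect_x, Ring.lie_def]
    simp only [detectGen, hne.symm, if_true, if_false]
    decide
  have h0 : detect a b (lnb ⁅x b, x a⁆ (l.map x)) = 0 :=
    (LieHom.mem_ker ..).1 (LW_le_ker_detect hab hmem)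
  rw [detect_lnb hu hl] at h0
  simpa using congrFun (congrFun h0 0) 1


end Detect

/-- For `n ≥ 3` and indices `i₁ > i₂ ≤ i₃ ≤ ⋯ ≤ i_n` (encoded as `i0`, `i1` and the
list `rest = [i₃,…,i_n]`), the left-normed bracket `[x_{i₁}, x_{i₂}, …, x_{i_n}]` lies
in `L(W)` iff either `(i₁,i₂) ∈ {(2,1),(4,3)}` (0-based: `(1,0),(3,2)`) and some later
index avoids `{i₁,i₂}`, or `(i₁,i₂) ∉ {(2,1),(4,3),(6,5)}` (0-based: `(1,0),(3,2),(5,4)`). -/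
theorem mem_LW_iff (n : ℕ) (hn : 3 ≤ n) (i0 i1 : Fin 6) (rest : List (Fin 6))
    (hlen : rest.length + 2 = n) (h01 : i1 < i0)
    (hchain : List.Chain' (· ≤ ·) (i1 :: rest)) :
    lnb (x i0) ((i1 :: rest).map x) ∈ LW ↔
      (((i0 = 1 ∧ i1 = 0) ∨ (i0 = 3 ∧ i1 = 2)) ∧ ∃ t ∈ rest, t ≠ i0 ∧ t ≠ i1) ∨
      ((i0, i1) ∉ ({(1, 0), (3, 2), (5, 4)} : Set (Fin 6 × Fin 6))) := by
  change lnb ⁅x i0, x i1⁆ (rest.map x) ∈ LW ↔ _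
  have hge : ∀ t ∈ rest, i1 ≤ t := by
    have hp : List.Pairwise (· ≤ ·) (i1 :: rest) := List.isChain_iff_pairwise.1 hchain
    exact (List.pairwise_cons.1 hp).1
  by_cases hb : (i1 : ℕ) / 2 = (i0 : ℕ) / 2
  · have hne : i1 ≠ i0 := h01.ne
    -- Two indices `i1 < i0` in one block exhaust the block.
    have hblock : ∀ t : Fin 6, (t : ℕ) / 2 ≠ (i1 : ℕ) / 2 ↔ t ≠ i0 ∧ t ≠ i1 := by
      clear hchain hge
      decide +revert
    have hpair : (i0, i1) ∈ ({(1, 0), (3, 2), (5, 4)} : Set (Fin 6 × Fin 6)) := by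
      simp only [Set.mem_insert_iff, Set.mem_singleton_iff]
      clear hchain hge hblock
      decide +revert
    constructor
    · intro hmem
      have hex : ∃ t ∈ rest, t ≠ i0 ∧ t ≠ i1 := by
        by_contra! hcon
        exact lnb_notMem_LW hne hb (fun t ht => or_iff_not_imp_left.2 (hcon t ht)) hmem
      refine Or.inl ⟨?_, hex⟩
      obtain ⟨t, ht, ht0, ht1⟩ := hex
      have htge := hge t ht
      simp only [Set.mem_insert_iff, Set.mem_singleton_iff, Prod.mk.injEq] at hpair
      rcases hpair with h | h | ⟨rfl, rfl⟩
      · exact Or.inl h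
      · exact Or.inr h
      · -- No index that is at least `4` avoids both `4` and `5`.
        omega
    · rintro (⟨-, t, ht, hne⟩ | h)
      · refine lnb_mem_LW_of_exists (k := (i1 : ℕ) / 2) (fun s hs => ?_) ⟨t, ht, (hblock t).2 hne⟩
        exact lie_lie_mem_LW (lie_x_mem_LW (by omega)) (lie_x_mem_LW (by omega))
      · exact absurd hpair h
  · refine iff_of_true (lnb_mem_LW (lie_x_mem_LW fun h => hb h.symm) _) (Or.inr ?_)
    simp only [Set.mem_insert_iff, Set.mem_singleton_iff, Prod.mk.injEq]
    rintro (⟨rfl, rfl⟩ | ⟨rfl, rfl⟩ | ⟨rfl, rfl⟩) <;> exact hb rfl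
end
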